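/- arXiv:0907.5524 — 4 statements merged into one kernel-verified Lean document; each statement's English description precedes it below -/
import Mathlib

section
/- Let N ≥ 2, α ∈ (0,2), and let g : S^{N-1} → (0,∞) be continuous and even (g(-θ) = g(θ)). Set J(z) = g(z/|z|) |z|^{-(N+α)} for z ≠ 0. Let q : ℝ → ℝ be a bounded C² function with bounded first and second derivatives. Then for every unit vector e ∈ S^{N-1} and every r ∈ ℝ, the function z ↦ q(r + e·z) − q(r) − q'(r)(e·z)·1_{{|z| ≤ 1}}(z) times J(z) is Lebesgue integrable on ℝ^N, and ∫_{ℝ^N} ( q(r + e·z) − q(r) − q'(r)(e·z) 1_{{|z| ≤ 1}}(z) ) J(z) dz = a₁₁(e) · ∫_ℝ ( q(r + t) − q(r) − q'(r) t · 1_{{|t| ≤ 1}}(t) ) |t|^{-(1+α)} dt. -/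
/-!
Changing the cutoff of the gradient correction from `‖z‖ ≤ 1` to `|⟪e, z⟫| ≤ 1` alters the
integrand by an odd function, because the kernel is even, so the integral does not change. With the
second cutoff the integrand is a function of `t = ⟪e, z⟫` times the kernel, and Fubini in the
coordinates `z = t • e + φ y` applies: on the slice at height `t ≠ 0` the substitution `y = t • u`
and the homogeneity of the kernel produce the factor `|t| ^ (N - 1) * |t| ^ (-(N + α))`.
-/

open MeasureTheory Metric Filter
open scoped RealInnerProductSpace Topology

/-! ### The compensated increment -/

/-- The first-order compensated increment `q (r + t) - q r - q'(r) t 𝟙_{ρ ≤ 1}`. The cutoff variable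
`ρ` is kept separate from `t` so that the truncations `‖z‖ ≤ 1` and `|t| ≤ 1` are both instances. -/
noncomputable def compensatedIncrement (q : ℝ → ℝ) (r ρ t : ℝ) : ℝ :=
  q (r + t) - q r - if ρ ≤ 1 then deriv q r * t else 0

lemma norm_sub_sub_smul_deriv_le {G : Type*} [NormedAddCommGroup G] [NormedSpace ℝ G]
    {f : ℝ → G} {C : NNReal} (hf : Differentiable ℝ f) (hf' : LipschitzWith C (deriv f))
    (x y : ℝ) : ‖f y - f x - (y - x) • deriv f x‖ ≤ C * ‖y - x‖ ^ 2 := by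
  have h_deriv : ∀ z ∈ closedBall x ‖y - x‖,
      ‖fderiv ℝ f z - .toSpanSingleton ℝ (deriv f x)‖ ≤ C * ‖y - x‖ := fun z hz ↦ by
    calc ‖fderiv ℝ f z - .toSpanSingleton ℝ (deriv f x)‖ = ‖deriv f z - deriv f x‖ := by
          rw [← toSpanSingleton_deriv, ← ContinuousLinearMap.toSpanSingletonLIE_apply,
            ← ContinuousLinearMap.toSpanSingletonLIE_apply, ← map_sub, LinearIsometryEquiv.norm_map]
      _ ≤ C * ‖z - x‖ := hf'.norm_sub_le z x
      _ ≤ C * ‖y - x‖ := by gcongr; exact mem_closedBall_iff_norm.1 hz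
  calc ‖f y - f x - (y - x) • deriv f x‖ ≤ C * ‖y - x‖ * ‖y - x‖ :=
        (convex_closedBall x _).norm_image_sub_le_of_norm_fderiv_le' (fun z _ ↦ hf z) h_deriv
          (mem_closedBall_self (norm_nonneg _)) (mem_closedBall_iff_norm.2 le_rfl)
    _ = C * ‖y - x‖ ^ 2 := by ring

lemma abs_compensatedIncrement_le {q : ℝ → ℝ} {B : ℝ} {C : NNReal} (hqB : ∀ x, |q x| ≤ B)
    (hq : Differentiable ℝ q) (hq' : LipschitzWith C (deriv q)) (r : ℝ) {ρ t : ℝ}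
    (htρ : |t| ≤ ρ) : |compensatedIncrement q r ρ t| ≤ (2 * B + C) * min 1 (ρ ^ 2) := by
  have hB : 0 ≤ B := (abs_nonneg _).trans (hqB 0)
  have hρ : 0 ≤ ρ := (abs_nonneg t).trans htρ
  rw [compensatedIncrement]
  split_ifs with h
  · rw [min_eq_right (pow_le_one₀ hρ h)]
    calc |q (r + t) - q r - deriv q r * t| ≤ C * |t| ^ 2 := by
          simpa [mul_comm] using norm_sub_sub_smul_deriv_le hq hq' r (r + t)
      _ ≤ C * ρ ^ 2 := by gcongr
      _ ≤ (2 * B + C) * ρ ^ 2 := by gcongr; linarith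
  · rw [min_eq_left (one_le_pow₀ (not_le.1 h).le), sub_zero]
    linarith [abs_sub (q (r + t)) (q r), hqB (r + t), hqB r, C.coe_nonneg]

lemma exists_lipschitzWith_deriv_of_abs_deriv_deriv_le {q : ℝ → ℝ} (hq : ContDiff ℝ 2 q)
    (hq'' : ∃ M, ∀ x, |deriv (deriv q) x| ≤ M) : ∃ C, LipschitzWith C (deriv q) := by
  obtain ⟨M, hM⟩ := hq''
  have hq' : Differentiable ℝ (deriv q) :=
    (hq.iterate_deriv' 1 1).differentiable one_ne_zero
  exact ⟨M.toNNReal, lipschitzWith_of_nnnorm_deriv_le hq' fun x ↦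
    NNReal.le_toNNReal_of_coe_le (hM x)⟩

/-! ### Integrability against singular kernels -/

lemma integrableOn_Ioi_min_one_sq_mul_rpow {α : ℝ} (hα0 : 0 < α) (hα2 : α < 2) :
    IntegrableOn (fun y : ℝ ↦ min 1 (y ^ 2) * y ^ (-1 - α)) (Set.Ioi 0) := by
  rw [← Set.Ioc_union_Ioi_eq_Ioi (zero_le_one (α := ℝ))]
  refine IntegrableOn.union ?near_zero ?near_infinity
  case near_zero =>
    have h : IntegrableOn (fun y : ℝ ↦ y ^ (1 - α)) (Set.Ioc 0 1) :=
      (intervalIntegrable_iff_integrableOn_Ioc_of_le zero_le_one).1 <|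
        intervalIntegral.intervalIntegrable_rpow' (by linarith)
    refine h.congr_fun (fun y ⟨hy0, hy1⟩ ↦ ?_) measurableSet_Ioc
    simp only [min_eq_right (pow_le_one₀ hy0.le hy1)]
    rw [← Real.rpow_natCast y 2, ← Real.rpow_add hy0]
    congr 1
    push_cast
    ring
  case near_infinity =>
    have h : IntegrableOn (fun y : ℝ ↦ y ^ (-1 - α)) (Set.Ioi 1) :=
      integrableOn_Ioi_rpow_of_lt (by linarith) zero_lt_one
    refine h.congr_fun (fun y hy ↦ ?_) measurableSet_Ioi
    simp only [min_eq_left (one_le_pow₀ (Set.mem_Ioi.1 hy).le), one_mul]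

section Integrability

variable {E : Type*} [NormedAddCommGroup E] [NormedSpace ℝ E] [FiniteDimensional ℝ E]
  [MeasurableSpace E] [BorelSpace E] {μ : Measure E} [μ.IsAddHaarMeasure]

lemma integrable_min_one_norm_sq_mul_norm_rpow [Nontrivial E] {α : ℝ} (hα0 : 0 < α)
    (hα2 : α < 2) :
    Integrable (fun z : E ↦ min 1 (‖z‖ ^ 2) * ‖z‖ ^ (-((Module.finrank ℝ E : ℝ) + α))) μ := by
  rw [integrable_fun_norm_addHaar μ
    (f := fun y : ℝ ↦ min 1 (y ^ 2) * y ^ (-((Module.finrank ℝ E : ℝ) + α)))]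
  refine (integrableOn_Ioi_min_one_sq_mul_rpow hα0 hα2).congr_fun (fun y hy ↦ ?_) measurableSet_Ioi
  have h_finrank : 1 ≤ Module.finrank ℝ E := Module.finrank_pos
  simp only [smul_eq_mul]
  rw [← Real.rpow_natCast y (Module.finrank ℝ E - 1), mul_left_comm, ← Real.rpow_add hy]
  congr 2
  push_cast [h_finrank]
  ring

lemma integrable_compensatedIncrement_mul [Nontrivial E] {α : ℝ} (hα0 : 0 < α) (hα2 : α < 2)
    {q : ℝ → ℝ} {B : ℝ} {C : NNReal} (hqB : ∀ x, |q x| ≤ B) (hq : Differentiable ℝ q)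
    (hq' : LipschitzWith C (deriv q)) (r : ℝ) {ρ l : E → ℝ} (hρ : Measurable ρ)
    (hl : Measurable l) (hlρ : ∀ z, |l z| ≤ ρ z) (hρ_norm : ∀ z, ρ z ≤ ‖z‖) {K : E → ℝ}
    (hK : AEStronglyMeasurable K μ) {G : ℝ}
    (hKG : ∀ z ≠ 0, |K z| ≤ G * ‖z‖ ^ (-((Module.finrank ℝ E : ℝ) + α))) :
    Integrable (fun z ↦ compensatedIncrement q r (ρ z) (l z) * K z) μ := by
  have hB : 0 ≤ B := (abs_nonneg _).trans (hqB 0)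
  have h_bound (z : E) :
      |compensatedIncrement q r (ρ z) (l z)| ≤ (2 * B + C) * min 1 (‖z‖ ^ 2) := by
    have hρ_nonneg : 0 ≤ ρ z := (abs_nonneg _).trans (hlρ z)
    refine (abs_compensatedIncrement_le hqB hq hq' r (hlρ z)).trans ?_
    gcongr
    exact hρ_norm z
  have h_meas : Measurable fun z ↦ compensatedIncrement q r (ρ z) (l z) := by
    have hq_meas : Measurable q := hq.continuous.measurable
    exact (by fun_prop : Measurable fun z ↦ q (r + l z) - q r).sub <|
      Measurable.ite (measurableSet_le hρ measurable_const) (by fun_prop) measurable_const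
  refine ((integrable_min_one_norm_sq_mul_norm_rpow hα0 hα2).const_mul ((2 * B + C) * G)).mono'
    (h_meas.aestronglyMeasurable.mul hK) ?_
  filter_upwards [Measure.ae_ne μ (0 : E)] with z hz
  calc ‖compensatedIncrement q r (ρ z) (l z) * K z‖
      = |compensatedIncrement q r (ρ z) (l z)| * |K z| := by rw [Real.norm_eq_abs, abs_mul]
    _ ≤ (2 * B + C) * min 1 (‖z‖ ^ 2) * (G * ‖z‖ ^ (-((Module.finrank ℝ E : ℝ) + α))) :=
        mul_le_mul (h_bound z) (hKG z hz) (abs_nonneg _) (by positivity)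
    _ = (2 * B + C) * G * (min 1 (‖z‖ ^ 2) * ‖z‖ ^ (-((Module.finrank ℝ E : ℝ) + α))) := by ring

end Integrability

lemma integral_compensatedIncrement_mul_congr_cutoff {E : Type*} [AddGroup E]
    [MeasurableSpace E] [MeasurableNeg E] {μ : Measure E} [μ.IsNegInvariant] {q : ℝ → ℝ} {r : ℝ}
    {ρ ρ' l K : E → ℝ} (hρ : ρ.Even) (hρ' : ρ'.Even) (hl : l.Odd) (hK : K.Even)
    (h_int : Integrable (fun z ↦ compensatedIncrement q r (ρ z) (l z) * K z) μ)
    (h_int' : Integrable (fun z ↦ compensatedIncrement q r (ρ' z) (l z) * K z) μ) :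
    ∫ z, compensatedIncrement q r (ρ z) (l z) * K z ∂μ =
      ∫ z, compensatedIncrement q r (ρ' z) (l z) * K z ∂μ := by
  set d : E → ℝ := fun z ↦ compensatedIncrement q r (ρ z) (l z) * K z -
    compensatedIncrement q r (ρ' z) (l z) * K z with hd
  have hd_odd (z : E) : d (-z) = -d z := by
    simp only [hd, compensatedIncrement, hρ z, hρ' z, hl z, hK z]
    split_ifs <;> ring
  have hd_integral : ∫ z, d z ∂μ = 0 := by
    have h := integral_neg_eq_self d μ
    simp only [hd_odd, integral_neg] at h
    linarith
  exact sub_eq_zero.1 (by rw [← integral_sub h_int h_int', hd_integral])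

/-! ### Homogeneous kernels -/

section Kernel

variable {E : Type*} [NormedAddCommGroup E] [NormedSpace ℝ E] {K g : E → ℝ} {s : ℝ}

/-- Absolute homogeneity of degree `s` away from the origin; in particular `K` is even. Nothing is
assumed on `K 0`, since the kernels `g (z/|z|) |z|^s` are only defined for `z ≠ 0`. -/
def AbsHomogeneous (K : E → ℝ) (s : ℝ) : Prop :=
  ∀ t : ℝ, t ≠ 0 → ∀ z, z ≠ 0 → K (t • z) = |t| ^ s * K z

lemma AbsHomogeneous.even (hK : AbsHomogeneous K s) : K.Even := fun z ↦ by
  rcases eq_or_ne z 0 with rfl | hz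
  · rw [neg_zero]
  · simpa using hK (-1) (by norm_num) z hz

lemma inv_norm_smul_mem_sphere {z : E} (hz : z ≠ 0) : ‖z‖⁻¹ • z ∈ sphere (0 : E) 1 := by
  simp [norm_smul, hz]

lemma absHomogeneous_of_polar (hg : ∀ θ ∈ sphere (0 : E) 1, g (-θ) = g θ)
    (hK : ∀ z, z ≠ 0 → K z = g (‖z‖⁻¹ • z) * ‖z‖ ^ s) : AbsHomogeneous K s := fun t ht z hz ↦ by
  have h_dir : g (‖t • z‖⁻¹ • t • z) = g (‖z‖⁻¹ • z) := by
    rw [norm_smul, Real.norm_eq_abs, mul_inv_rev, smul_smul, mul_assoc]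
    rcases ht.lt_or_gt with h | h
    · rw [abs_of_neg h, inv_neg, neg_mul, inv_mul_cancel₀ ht, mul_neg_one, neg_smul,
        hg _ (inv_norm_smul_mem_sphere hz)]
    · rw [abs_of_pos h, inv_mul_cancel₀ ht, mul_one]
  rw [hK z hz, hK _ (smul_ne_zero ht hz), h_dir, norm_smul, Real.norm_eq_abs,
    Real.mul_rpow (abs_nonneg t) (norm_nonneg z)]
  ring

lemma abs_le_mul_norm_rpow_of_polar {G : ℝ} (hg : ∀ θ ∈ sphere (0 : E) 1, |g θ| ≤ G)
    (hK : ∀ z, z ≠ 0 → K z = g (‖z‖⁻¹ • z) * ‖z‖ ^ s) (z : E) (hz : z ≠ 0) :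
    |K z| ≤ G * ‖z‖ ^ s := by
  rw [hK z hz, abs_mul, abs_of_nonneg (Real.rpow_nonneg (norm_nonneg z) s)]
  gcongr
  exact hg _ (inv_norm_smul_mem_sphere hz)

lemma measurable_of_polar [MeasurableSpace E] [BorelSpace E] [SecondCountableTopology E]
    (hg : Measurable ((sphere (0 : E) 1).domRestrict g))
    (hK : ∀ z, z ≠ 0 → K z = g (‖z‖⁻¹ • z) * ‖z‖ ^ s) : Measurable K := by
  have h_dir : Measurable fun z : {z : E | z ≠ 0} ↦
      (⟨‖(z : E)‖⁻¹ • z, inv_norm_smul_mem_sphere z.2⟩ : sphere (0 : E) 1) := by fun_prop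
  have h_norm : Measurable fun z : {z : E | z ≠ 0} ↦ ‖(z : E)‖ ^ s := by fun_prop
  have hK_restrict : {z : E | z ≠ 0}.domRestrict K =
      fun z : {z : E | z ≠ 0} ↦ g (‖(z : E)‖⁻¹ • (z : E)) * ‖(z : E)‖ ^ s :=
    funext fun z ↦ hK z z.2
  exact measurable_of_measurable_on_compl_singleton 0 <| hK_restrict ▸ (hg.comp h_dir).mul h_norm

end Kernel

/-! ### Slicing orthogonally to a unit vector -/

section Slices

variable {E F : Type*} [NormedAddCommGroup E] [InnerProductSpace ℝ E] [NormedAddCommGroup F]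
  [InnerProductSpace ℝ F] {e : E} {φ : F →ₗᵢ[ℝ] E}

lemma inner_eq_zero_of_range_eq_orthogonal (hφ : LinearMap.range φ.toLinearMap = (ℝ ∙ e)ᗮ)
    (y : F) : ⟪e, φ y⟫ = 0 :=
  Submodule.mem_orthogonal_singleton_iff_inner_right.1 <| hφ ▸ LinearMap.mem_range_self _ y

lemma inner_smul_add_of_range_eq_orthogonal (he : ‖e‖ = 1)
    (hφ : LinearMap.range φ.toLinearMap = (ℝ ∙ e)ᗮ) (t : ℝ) (y : F) :
    ⟪e, t • e + φ y⟫ = t := by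
  rw [inner_add_right, inner_smul_right, inner_eq_zero_of_range_eq_orthogonal hφ,
    real_inner_self_eq_norm_sq, he]
  ring

lemma norm_add_sq_of_range_eq_orthogonal (he : ‖e‖ = 1)
    (hφ : LinearMap.range φ.toLinearMap = (ℝ ∙ e)ᗮ) (y : F) :
    ‖e + φ y‖ ^ 2 = 1 + ‖y‖ ^ 2 := by
  rw [norm_add_sq_real, inner_eq_zero_of_range_eq_orthogonal hφ, φ.norm_map, he]
  ring

lemma add_ne_zero_of_range_eq_orthogonal (he : ‖e‖ = 1)
    (hφ : LinearMap.range φ.toLinearMap = (ℝ ∙ e)ᗮ) (y : F) : e + φ y ≠ 0 := fun h ↦ by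
  have h_norm := norm_add_sq_of_range_eq_orthogonal he hφ y
  rw [h, norm_zero] at h_norm
  nlinarith [sq_nonneg ‖y‖]

lemma eq_mul_one_add_norm_sq_rpow_of_polar {K g : E → ℝ} {s : ℝ}
    (hK : ∀ z, z ≠ 0 → K z = g (‖z‖⁻¹ • z) * ‖z‖ ^ s) (he : ‖e‖ = 1)
    (hφ : LinearMap.range φ.toLinearMap = (ℝ ∙ e)ᗮ) (u : F) :
    K (e + φ u) = g (‖e + φ u‖⁻¹ • (e + φ u)) * (1 + ‖u‖ ^ 2) ^ (s / 2) := by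
  rw [hK _ (add_ne_zero_of_range_eq_orthogonal he hφ u),
    ← norm_add_sq_of_range_eq_orthogonal he hφ, ← Real.rpow_natCast_mul (norm_nonneg _)]
  congr 2
  push_cast
  ring

/-- The coordinates `(t, y) ↦ t • e + φ y` on `E`, where `φ` parametrizes the hyperplane `eᗮ`, as a
linear isometry. -/
noncomputable def hyperplaneIsometry (he : ‖e‖ = 1)
    (hφ : LinearMap.range φ.toLinearMap = (ℝ ∙ e)ᗮ) : WithLp 2 (ℝ × F) ≃ₗᵢ[ℝ] E :=
  (LinearIsometryEquiv.withLpProdCongr 2 (LinearIsometryEquiv.toSpanUnitSingleton e he)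
    (φ.equivRange.trans (LinearIsometryEquiv.ofEq _ _ hφ))).trans
    (ℝ ∙ e).orthogonalDecomposition.symm

lemma hyperplaneIsometry_apply (he : ‖e‖ = 1)
    (hφ : LinearMap.range φ.toLinearMap = (ℝ ∙ e)ᗮ) (p : WithLp 2 (ℝ × F)) :
    hyperplaneIsometry he hφ p = p.fst • e + φ p.snd := by
  simp [hyperplaneIsometry]

variable [FiniteDimensional ℝ F]

lemma finrank_eq_finrank_add_one (he : ‖e‖ = 1)
    (hφ : LinearMap.range φ.toLinearMap = (ℝ ∙ e)ᗮ) :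
    Module.finrank ℝ E = Module.finrank ℝ F + 1 := by
  rw [← (hyperplaneIsometry he hφ).toLinearEquiv.finrank_eq,
    (WithLp.linearEquiv 2 ℝ (ℝ × F)).finrank_eq, Module.finrank_prod, Module.finrank_self,
    add_comm]

variable [MeasurableSpace F] [BorelSpace F]

lemma AbsHomogeneous.integral_hyperplane_smul {K : E → ℝ} {s : ℝ} (hK : AbsHomogeneous K s)
    (he : ‖e‖ = 1) (hφ : LinearMap.range φ.toLinearMap = (ℝ ∙ e)ᗮ) {t : ℝ}
    (ht : t ≠ 0) :
    ∫ y : F, K (t • e + φ y) = |t| ^ (s + Module.finrank ℝ F) * ∫ u : F, K (e + φ u) := by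
  have h_slice (u : F) : K (t • e + φ (t • u)) = |t| ^ s * K (e + φ u) := by
    rw [map_smul, ← smul_add, hK t ht _ (add_ne_zero_of_range_eq_orthogonal he hφ u)]
  have h_scale := Measure.integral_comp_smul volume (fun y : F ↦ K (t • e + φ y)) t
  simp only [h_slice, integral_const_mul, smul_eq_mul, abs_inv, abs_pow] at h_scale
  have ht_pow : |t| ^ Module.finrank ℝ F ≠ 0 := pow_ne_zero _ (abs_ne_zero.2 ht)
  rw [eq_inv_mul_iff_mul_eq₀ ht_pow] at h_scale
  rw [← h_scale, Real.rpow_add_natCast (abs_ne_zero.2 ht)]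
  ring

variable [FiniteDimensional ℝ E] [MeasurableSpace E] [BorelSpace E]

lemma integral_eq_integral_integral_hyperplane (he : ‖e‖ = 1)
    (hφ : LinearMap.range φ.toLinearMap = (ℝ ∙ e)ᗮ) {f : E → ℝ} (hf : Integrable f) :
    ∫ z, f z = ∫ t : ℝ, ∫ y : F, f (t • e + φ y) := by
  let ψ : ℝ × F ≃ᵐ E :=
    (MeasurableEquiv.toLp 2 (ℝ × F)).trans (hyperplaneIsometry he hφ).toMeasurableEquiv
  have hψ : MeasurePreserving ψ :=
    (hyperplaneIsometry he hφ).measurePreserving.comp (WithLp.volume_preserving_toLp ℝ F)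
  have hψ_apply (p : ℝ × F) : ψ p = p.1 • e + φ p.2 := hyperplaneIsometry_apply he hφ _
  have hf_comp : Integrable (fun p ↦ f (ψ p)) (volume.prod volume) :=
    (hψ.integrable_comp_emb ψ.measurableEmbedding).2 hf
  rw [← hψ.integral_comp', Measure.volume_eq_prod, integral_prod _ hf_comp]
  simp only [hψ_apply]

lemma AbsHomogeneous.integral_comp_inner_mul {K : E → ℝ} {s : ℝ} (hK : AbsHomogeneous K s)
    (he : ‖e‖ = 1) (hφ : LinearMap.range φ.toLinearMap = (ℝ ∙ e)ᗮ) {f : ℝ → ℝ}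
    (hf : Integrable fun z ↦ f ⟪e, z⟫ * K z) :
    ∫ z, f ⟪e, z⟫ * K z =
      (∫ u : F, K (e + φ u)) * ∫ t, f t * |t| ^ (s + Module.finrank ℝ F) := by
  rw [integral_eq_integral_integral_hyperplane he hφ hf, ← integral_const_mul]
  refine integral_congr_ae ?_
  filter_upwards [Measure.ae_ne volume (0 : ℝ)] with t ht
  simp only [inner_smul_add_of_range_eq_orthogonal he hφ, integral_const_mul]
  rw [hK.integral_hyperplane_smul he hφ ht]
  ring

/-! ### The reduction formula -/

theorem stmt_0_general {α : ℝ} (hα0 : 0 < α) (hα2 : α < 2) {g : E → ℝ} {G : ℝ}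
    (hg_meas : Measurable ((sphere (0 : E) 1).domRestrict g))
    (hg_bdd : ∀ θ ∈ sphere (0 : E) 1, |g θ| ≤ G)
    (hg_even : ∀ θ ∈ sphere (0 : E) 1, g (-θ) = g θ) {J : E → ℝ}
    (hJ : ∀ z, z ≠ 0 → J z = g (‖z‖⁻¹ • z) * ‖z‖ ^ (-((Module.finrank ℝ E : ℝ) + α)))
    {q : ℝ → ℝ} {B : ℝ} {C : NNReal} (hq_bdd : ∀ x, |q x| ≤ B) (hq : Differentiable ℝ q)
    (hq' : LipschitzWith C (deriv q)) (he : ‖e‖ = 1)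
    (hφ : LinearMap.range φ.toLinearMap = (ℝ ∙ e)ᗮ) (r : ℝ) :
    Integrable (fun z : E ↦
      (q (r + ⟪e, z⟫) - q r - (if ‖z‖ ≤ 1 then deriv q r * ⟪e, z⟫ else 0)) * J z) ∧
    ∫ z : E, (q (r + ⟪e, z⟫) - q r - (if ‖z‖ ≤ 1 then deriv q r * ⟪e, z⟫ else 0)) * J z =
      (∫ u : F, g (‖e + φ u‖⁻¹ • (e + φ u)) *
          (1 + ‖u‖ ^ 2) ^ (-((Module.finrank ℝ E : ℝ) + α) / 2)) *
        ∫ t : ℝ, (q (r + t) - q r - (if |t| ≤ 1 then deriv q r * t else 0)) *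
          |t| ^ (-(1 + α)) := by
  have : Nontrivial E := ⟨e, 0, norm_ne_zero_iff.1 (by simp [he])⟩
  have hJ_hom := absHomogeneous_of_polar hg_even hJ
  have h_inner (z : E) : |⟪e, z⟫| ≤ ‖z‖ := by simpa [he] using abs_real_inner_le_norm e z
  have h_integrable (ρ : E → ℝ) (hρ : Measurable ρ) (h_inner_ρ : ∀ z, |⟪e, z⟫| ≤ ρ z)
      (hρ_norm : ∀ z, ρ z ≤ ‖z‖) :
      Integrable fun z ↦ compensatedIncrement q r (ρ z) ⟪e, z⟫ * J z :=
    integrable_compensatedIncrement_mul hα0 hα2 hq_bdd hq hq' r hρ (by fun_prop) h_inner_ρ hρ_norm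
      (measurable_of_polar hg_meas hJ).aestronglyMeasurable
      (abs_le_mul_norm_rpow_of_polar hg_bdd hJ)
  have h_int_norm := h_integrable (‖·‖) (by fun_prop) h_inner fun _ ↦ le_rfl
  have h_int_inner := h_integrable (|⟪e, ·⟫|) (by fun_prop) (fun _ ↦ le_rfl) h_inner
  have h_degree : -((Module.finrank ℝ E : ℝ) + α) + Module.finrank ℝ F = -(1 + α) := by
    rw [finrank_eq_finrank_add_one he hφ]
    push_cast
    ring
  refine ⟨h_int_norm, ?_⟩
  calc ∫ z, compensatedIncrement q r ‖z‖ ⟪e, z⟫ * J z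
      = ∫ z, compensatedIncrement q r |⟪e, z⟫| ⟪e, z⟫ * J z :=
        integral_compensatedIncrement_mul_congr_cutoff norm_neg (fun z ↦ by simp)
          (fun z ↦ inner_neg_right e z) hJ_hom.even h_int_norm h_int_inner
    _ = (∫ u, J (e + φ u)) * ∫ t, compensatedIncrement q r |t| t * |t| ^ (-(1 + α)) := by
        rw [hJ_hom.integral_comp_inner_mul (f := fun t ↦ compensatedIncrement q r |t| t) he hφ
          h_int_inner, h_degree]
    _ = _ := by simp only [eq_mul_one_add_norm_sq_rpow_of_polar hJ he hφ, compensatedIncrement]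

end Slices

/-- **Reduction of the anisotropic fractional operator to dimension one.**
For a kernel `J z = g(z/|z|) |z|^{-(N+α)}` and a bounded `C²` profile `q`, the compensated
integral of `z ↦ q(r + e·z)` against `J` reduces to a one-dimensional fractional Laplacian
of order `α`, up to the multiplicative constant
`a₁₁(e) = ∫_{e^⊥} g((e+u)/|e+u|) (1+|u|²)^{-(N+α)/2} du`,
where the hyperplane `e^⊥ ≅ ℝ^{N-1}` is parametrized by a linear isometry `φ`. -/
theorem stmt_0 (N : ℕ) (hN : 2 ≤ N) (α : ℝ) (hα0 : 0 < α) (hα2 : α < 2)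
    (g : EuclideanSpace ℝ (Fin N) → ℝ)
    (hg_cont : ContinuousOn g (sphere (0 : EuclideanSpace ℝ (Fin N)) 1))
    (hg_pos : ∀ θ ∈ sphere (0 : EuclideanSpace ℝ (Fin N)) 1, 0 < g θ)
    (hg_even : ∀ θ ∈ sphere (0 : EuclideanSpace ℝ (Fin N)) 1, g (-θ) = g θ)
    (J : EuclideanSpace ℝ (Fin N) → ℝ)
    (hJ : ∀ z : EuclideanSpace ℝ (Fin N), z ≠ 0 →
      J z = g (‖z‖⁻¹ • z) * ‖z‖ ^ (-((N : ℝ) + α)))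
    (q : ℝ → ℝ) (hq : ContDiff ℝ 2 q)
    (hq_bdd : ∃ M, ∀ r, |q r| ≤ M)
    (hq'_bdd : ∃ M, ∀ r, |deriv q r| ≤ M)
    (hq''_bdd : ∃ M, ∀ r, |deriv (deriv q) r| ≤ M)
    (e : EuclideanSpace ℝ (Fin N)) (he : ‖e‖ = 1)
    (φ : EuclideanSpace ℝ (Fin (N - 1)) →ₗᵢ[ℝ] EuclideanSpace ℝ (Fin N))
    (hφ : LinearMap.range φ.toLinearMap = (ℝ ∙ e)ᗮ)
    (r : ℝ) :
    Integrable (fun z : EuclideanSpace ℝ (Fin N) =>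
      (q (r + ⟪e, z⟫) - q r - (if ‖z‖ ≤ 1 then deriv q r * ⟪e, z⟫ else 0)) * J z) ∧
    ∫ z : EuclideanSpace ℝ (Fin N),
        (q (r + ⟪e, z⟫) - q r - (if ‖z‖ ≤ 1 then deriv q r * ⟪e, z⟫ else 0)) * J z =
      (∫ u : EuclideanSpace ℝ (Fin (N - 1)),
          g (‖e + φ u‖⁻¹ • (e + φ u)) * (1 + ‖u‖ ^ 2) ^ (-((N : ℝ) + α) / 2)) *
        ∫ t : ℝ, (q (r + t) - q r - (if |t| ≤ 1 then deriv q r * t else 0)) * |t| ^ (-(1 + α)) := by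
  obtain ⟨G, hG⟩ := (isCompact_sphere _ _).exists_bound_of_continuousOn hg_cont
  obtain ⟨B, hB⟩ := hq_bdd
  obtain ⟨C, hC⟩ := exists_lipschitzWith_deriv_of_abs_deriv_deriv_le hq hq''_bdd
  simpa only [finrank_euclideanSpace_fin] using
    stmt_0_general hα0 hα2 hg_cont.domRestrict.measurable hG hg_even
      (by simpa only [finrank_euclideanSpace_fin] using hJ) hB (hq.differentiable two_ne_zero) hC
      he hφ r
end

section
/- Let N ≥ 2, α ∈ (0,2), let g : S^{N-1} → [0,∞) be continuous and even, and let e ∈ S^{N-1} be a unit vector. Let F : ℝ → ℝ be measurable with ∫_ℝ |F(t)| |t|^{-(1+α)} dt < ∞. Then the function z ↦ F(e·z) g(z/|z|) |z|^{-(N+α)} is Lebesgue integrable on ℝ^N and ∫_{ℝ^N} F(e·z) g(z/|z|) |z|^{-(N+α)} dz = a₁₁(e) · ∫_ℝ F(t) |t|^{-(1+α)} dt. -/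
/-!
Almost every `z` has coordinates `z = t (e + φ u)` with `t = ⟪e, z⟫` and `u` in the hyperplane, and
then `dz = |t| ^ (N - 1) dt du`. Evenness of `g` makes the kernel homogeneous under all nonzero
dilations, negative ones included, so in these coordinates the integrand is the product of
`F t * |t| ^ (-(1 + α))` and the value of the kernel at `e + φ u`.
-/

open MeasureTheory Metric Filter
open scoped RealInnerProductSpace Topology

open Module (finrank)

namespace AnisotropicKernel

section AbsPowMeasure

/-- The measure `|t| ^ n dt` on the line, the radial part of Lebesgue measure in the coordinates
`z = t • (e + φ u)` when the hyperplane has dimension `n`. -/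
noncomputable def absPowMeasure (n : ℕ) : Measure ℝ :=
  volume.withDensity fun t => ENNReal.ofReal (|t| ^ n)

lemma absPowMeasure_absolutelyContinuous (n : ℕ) : absPowMeasure n ≪ volume :=
  withDensity_absolutelyContinuous _ _

instance sFinite_absPowMeasure (n : ℕ) : SFinite (absPowMeasure n) := by
  unfold absPowMeasure
  infer_instance

lemma measurable_ofReal_abs_pow (n : ℕ) : Measurable fun t : ℝ => ENNReal.ofReal (|t| ^ n) := by
  fun_prop

variable {G : Type*} [NormedAddCommGroup G] [NormedSpace ℝ G]

lemma integrable_absPowMeasure_iff {n : ℕ} {f : ℝ → G} :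
    Integrable f (absPowMeasure n) ↔ Integrable fun t => |t| ^ n • f t := by
  rw [absPowMeasure, integrable_withDensity_iff_integrable_smul' (measurable_ofReal_abs_pow n)
    (.of_forall fun _ => ENNReal.ofReal_lt_top)]
  simp only [ENNReal.toReal_ofReal (pow_nonneg (abs_nonneg _) n)]

lemma integral_absPowMeasure (n : ℕ) (f : ℝ → G) :
    ∫ t, f t ∂absPowMeasure n = ∫ t, |t| ^ n • f t := by
  rw [absPowMeasure, integral_withDensity_eq_integral_toReal_smul (measurable_ofReal_abs_pow n)
    (.of_forall fun _ => ENNReal.ofReal_lt_top)]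
  simp only [ENNReal.toReal_ofReal (pow_nonneg (abs_nonneg _) n)]

lemma measurePreserving_fst_smul_snd {V : Type*} [NormedAddCommGroup V] [NormedSpace ℝ V]
    [FiniteDimensional ℝ V] [MeasurableSpace V] [BorelSpace V] (μ : Measure V)
    [μ.IsAddHaarMeasure] :
    MeasurePreserving (fun p : ℝ × V => (p.1, p.1 • p.2))
      ((absPowMeasure (finrank ℝ V)).prod μ) (volume.prod μ) := by
  have hmeas : Measurable fun p : ℝ × V => (p.1, p.1 • p.2) := by fun_prop
  refine ⟨hmeas, Measure.ext fun s hs => ?_⟩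
  have hslice : ∀ t : ℝ, t ≠ 0 →
      ENNReal.ofReal (|t| ^ finrank ℝ V) * μ ((t • ·) ⁻¹' (Prod.mk t ⁻¹' s)) =
        μ (Prod.mk t ⁻¹' s) := fun t ht => by
    have hpos : 0 < |t| ^ finrank ℝ V := by positivity
    rw [Measure.addHaar_preimage_smul μ ht, abs_inv, abs_pow, ← mul_assoc,
      ← ENNReal.ofReal_mul hpos.le, mul_inv_cancel₀ hpos.ne', ENNReal.ofReal_one, one_mul]
  rw [Measure.map_apply hmeas hs, Measure.prod_apply (hmeas hs), Measure.prod_apply hs,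
    absPowMeasure, lintegral_withDensity_eq_lintegral_mul _ (measurable_ofReal_abs_pow _)
      (measurable_measure_prodMk_left (hmeas hs))]
  refine lintegral_congr_ae ?_
  filter_upwards [Measure.ae_ne volume (0 : ℝ)] with t ht
  exact hslice t ht

lemma abs_pow_mul_mul_rpow_ae_eq (F : ℝ → ℝ) (s : ℝ) (n : ℕ) :
    (fun t => |t| ^ n • (F t * |t| ^ s)) =ᵐ[volume] fun t => F t * |t| ^ (s + n) := by
  filter_upwards [Measure.ae_ne volume (0 : ℝ)] with t ht
  rw [Real.rpow_add_natCast (abs_ne_zero.2 ht), smul_eq_mul]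
  ring

end AbsPowMeasure

section HomogeneousExtension

variable {E G : Type*} [NormedAddCommGroup E] [NormedSpace ℝ E] {g : E → G} {s : ℝ}

lemma inv_norm_smul_mem_sphere {z : E} (hz : z ≠ 0) : ‖z‖⁻¹ • z ∈ sphere (0 : E) 1 := by
  simp [norm_smul, hz]

lemma apply_inv_norm_smul_smul (hg_even : ∀ θ ∈ sphere (0 : E) 1, g (-θ) = g θ) {t : ℝ}
    (ht : t ≠ 0) (z : E) : g (‖t • z‖⁻¹ • t • z) = g (‖z‖⁻¹ • z) := by
  rcases eq_or_ne z 0 with rfl | hz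
  · simp
  have hdir : ‖t • z‖⁻¹ • t • z = (|t|⁻¹ * t) • ‖z‖⁻¹ • z := by
    rw [norm_smul, Real.norm_eq_abs, mul_inv, smul_smul, smul_smul, mul_right_comm]
  rw [hdir]
  rcases ht.lt_or_gt with hneg | hpos
  · rw [abs_of_neg hneg, inv_neg, neg_mul, inv_mul_cancel₀ ht, neg_one_smul,
      hg_even _ (inv_norm_smul_mem_sphere hz)]
  · rw [abs_of_pos hpos, inv_mul_cancel₀ ht, one_smul]

variable [NormedAddCommGroup G] [NormedSpace ℝ G]

/-- The degree `s` homogeneous extension `z ↦ |z| ^ s g (z / |z|)` of the restriction of `g` to the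
unit sphere. Its value at the origin involves the junk value `g 0`. -/
noncomputable def homogeneousExtension (s : ℝ) (g : E → G) (z : E) : G :=
  ‖z‖ ^ s • g (‖z‖⁻¹ • z)

lemma homogeneousExtension_smul (hg_even : ∀ θ ∈ sphere (0 : E) 1, g (-θ) = g θ) {t : ℝ}
    (ht : t ≠ 0) (z : E) :
    homogeneousExtension s g (t • z) = |t| ^ s • homogeneousExtension s g z := by
  rw [homogeneousExtension, homogeneousExtension, apply_inv_norm_smul_smul hg_even ht, norm_smul,
    Real.norm_eq_abs, Real.mul_rpow (abs_nonneg t) (norm_nonneg z), mul_smul]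

lemma continuousOn_homogeneousExtension (hg_cont : ContinuousOn g (sphere (0 : E) 1)) :
    ContinuousOn (homogeneousExtension s g) {0}ᶜ := by
  have hnorm : ContinuousOn (fun z : E => ‖z‖) {0}ᶜ := continuous_norm.continuousOn
  have hne : ∀ z ∈ ({0}ᶜ : Set E), ‖z‖ ≠ 0 := fun z hz => norm_ne_zero_iff.2 hz
  exact (hnorm.rpow_const fun z hz => Or.inl (hne z hz)).smul <|
    hg_cont.comp ((hnorm.inv₀ hne).smul continuousOn_id) fun z hz => inv_norm_smul_mem_sphere hz

lemma aestronglyMeasurable_homogeneousExtension [SecondCountableTopology E] [MeasurableSpace E]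
    [BorelSpace E] {μ : Measure E} [NullSingletonClass μ]
    (hg_cont : ContinuousOn g (sphere (0 : E) 1)) :
    AEStronglyMeasurable (homogeneousExtension s g) μ := by
  have h := (continuousOn_homogeneousExtension (s := s) hg_cont).aestronglyMeasurable (μ := μ)
    (measurableSet_singleton 0).compl
  rwa [Measure.restrict_eq_self_of_ae_mem (s := {0}ᶜ) (Measure.ae_ne μ 0)] at h

end HomogeneousExtension

variable {E V G : Type*} [NormedAddCommGroup E] [InnerProductSpace ℝ E]
  [NormedAddCommGroup V] [InnerProductSpace ℝ V] [NormedAddCommGroup G] [NormedSpace ℝ G]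
  {e : E} {φ : V →ₗᵢ[ℝ] E}

section Hyperplane

/-- The isometry `(t, u) ↦ t • e + φ u` from the `ℓ²` product `ℝ × V` onto `E`, where the isometry
`φ` parametrizes the hyperplane orthogonal to the unit vector `e`. -/
noncomputable def orthogonalCoordinates (he : ‖e‖ = 1)
    (hφ : LinearMap.range φ.toLinearMap = (ℝ ∙ e)ᗮ) : WithLp 2 (ℝ × V) ≃ₗᵢ[ℝ] E :=
  (LinearIsometryEquiv.withLpProdCongr 2 (LinearIsometryEquiv.toSpanUnitSingleton e he)
    (φ.equivRange.trans (LinearIsometryEquiv.ofEq _ _ hφ))).trans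
      (ℝ ∙ e).orthogonalDecomposition.symm

lemma orthogonalCoordinates_apply (he : ‖e‖ = 1)
    (hφ : LinearMap.range φ.toLinearMap = (ℝ ∙ e)ᗮ) (p : WithLp 2 (ℝ × V)) :
    orthogonalCoordinates he hφ p = p.fst • e + φ p.snd := by
  simp [orthogonalCoordinates]

lemma finrank_eq_finrank_hyperplane_add_one [FiniteDimensional ℝ V] (he : ‖e‖ = 1)
    (hφ : LinearMap.range φ.toLinearMap = (ℝ ∙ e)ᗮ) : finrank ℝ E = finrank ℝ V + 1 := by
  rw [← (orthogonalCoordinates he hφ).toLinearEquiv.finrank_eq,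
    (WithLp.linearEquiv 2 ℝ (ℝ × V)).finrank_eq, Module.finrank_prod, Module.finrank_self,
    add_comm]

lemma inner_hyperplane_eq_zero (hφ : LinearMap.range φ.toLinearMap = (ℝ ∙ e)ᗮ) (u : V) :
    ⟪e, φ u⟫ = 0 :=
  Submodule.mem_orthogonal_singleton_iff_inner_right.1
    (hφ ▸ LinearMap.mem_range_self φ.toLinearMap u)

lemma inner_smul_add_hyperplane (he : ‖e‖ = 1)
    (hφ : LinearMap.range φ.toLinearMap = (ℝ ∙ e)ᗮ) (t : ℝ) (u : V) :
    ⟪e, t • (e + φ u)⟫ = t := by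
  simp [inner_smul_right, inner_add_right, inner_hyperplane_eq_zero hφ, he]

lemma norm_add_hyperplane_sq (he : ‖e‖ = 1) (hφ : LinearMap.range φ.toLinearMap = (ℝ ∙ e)ᗮ)
    (u : V) : ‖e + φ u‖ ^ 2 = 1 + ‖u‖ ^ 2 := by
  simp [norm_add_sq_real, inner_hyperplane_eq_zero hφ, he]

lemma add_hyperplane_ne_zero (he : ‖e‖ = 1) (hφ : LinearMap.range φ.toLinearMap = (ℝ ∙ e)ᗮ)
    (u : V) : e + φ u ≠ 0 := by
  have hpos : 0 < ‖e + φ u‖ ^ 2 := by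
    rw [norm_add_hyperplane_sq he hφ]
    positivity
  exact norm_ne_zero_iff.1 (pow_ne_zero_iff two_ne_zero |>.1 hpos.ne')

lemma norm_add_hyperplane_rpow (he : ‖e‖ = 1) (hφ : LinearMap.range φ.toLinearMap = (ℝ ∙ e)ᗮ)
    (s : ℝ) (u : V) : ‖e + φ u‖ ^ s = (1 + ‖u‖ ^ 2) ^ (s / 2) := by
  rw [← norm_add_hyperplane_sq he hφ, ← Real.rpow_natCast_mul (norm_nonneg _), Nat.cast_ofNat,
    mul_div_cancel₀ s two_ne_zero]

lemma homogeneousExtension_add_hyperplane {g : E → G} {s : ℝ} (he : ‖e‖ = 1)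
    (hφ : LinearMap.range φ.toLinearMap = (ℝ ∙ e)ᗮ) (u : V) :
    homogeneousExtension s g (e + φ u) =
      (1 + ‖u‖ ^ 2) ^ (s / 2) • g (‖e + φ u‖⁻¹ • (e + φ u)) := by
  rw [homogeneousExtension, norm_add_hyperplane_rpow he hφ]

variable [FiniteDimensional ℝ V] [MeasurableSpace V] [BorelSpace V]

lemma integrable_homogeneousExtension_add_hyperplane [FiniteDimensional ℝ E]
    {g : E → G} {s : ℝ} (hs : s < -finrank ℝ V)
    (hg_cont : ContinuousOn g (sphere (0 : E) 1)) (he : ‖e‖ = 1)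
    (hφ : LinearMap.range φ.toLinearMap = (ℝ ∙ e)ᗮ) :
    Integrable fun u => homogeneousExtension s g (e + φ u) := by
  have hne := add_hyperplane_ne_zero he hφ
  obtain ⟨C, hC⟩ := (isCompact_sphere (0 : E) 1).exists_bound_of_continuousOn hg_cont
  have hcont : Continuous fun u => homogeneousExtension s g (e + φ u) :=
    (continuousOn_homogeneousExtension hg_cont).comp_continuous
      (continuous_const.add φ.continuous) hne
  have hweight_int : Integrable fun u : V => (1 + ‖u‖ ^ 2) ^ (s / 2) := by
    simpa only [neg_neg] using
      integrable_rpow_neg_one_add_norm_sq (E := V) (μ := volume) (r := -s) (by linarith)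
  refine (hweight_int.mul_const C).mono' hcont.aestronglyMeasurable
    (.of_forall fun u => ?_)
  have hweight : (0 : ℝ) ≤ (1 + ‖u‖ ^ 2) ^ (s / 2) := by positivity
  rw [homogeneousExtension_add_hyperplane he hφ, norm_smul, Real.norm_of_nonneg hweight]
  exact mul_le_mul_of_nonneg_left (hC _ (inv_norm_smul_mem_sphere (hne u))) hweight

end Hyperplane

section HomogeneousKernel

variable [FiniteDimensional ℝ V] [MeasurableSpace V] [BorelSpace V]
  {K : E → G} {s : ℝ} {F : ℝ → ℝ}

lemma smul_homogeneous_comp_ae_eq (he : ‖e‖ = 1)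
    (hφ : LinearMap.range φ.toLinearMap = (ℝ ∙ e)ᗮ)
    (hK : ∀ t : ℝ, t ≠ 0 → ∀ z, K (t • z) = |t| ^ s • K z) :
    (fun p : ℝ × V => F ⟪e, p.1 • (e + φ p.2)⟫ • K (p.1 • (e + φ p.2)))
      =ᵐ[(absPowMeasure (finrank ℝ V)).prod volume]
        fun p => (F p.1 * |p.1| ^ s) • K (e + φ p.2) := by
  have hne : ∀ᵐ t ∂absPowMeasure (finrank ℝ V), t ≠ 0 :=
    (absPowMeasure_absolutelyContinuous _).ae_le (Measure.ae_ne volume 0)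
  filter_upwards [Measure.quasiMeasurePreserving_fst.ae hne] with p hp
  rw [inner_smul_add_hyperplane he hφ, hK _ hp, smul_smul]

variable [FiniteDimensional ℝ E] [MeasurableSpace E] [BorelSpace E]

lemma measurePreserving_smul_add_hyperplane (he : ‖e‖ = 1)
    (hφ : LinearMap.range φ.toLinearMap = (ℝ ∙ e)ᗮ) :
    MeasurePreserving (fun p : ℝ × V => p.1 • (e + φ p.2))
      ((absPowMeasure (finrank ℝ V)).prod volume) volume := by
  have hcoord : MeasurePreserving (fun p : ℝ × V => p.1 • e + φ p.2)
      (volume.prod volume) volume := by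
    simpa only [Function.comp_def, orthogonalCoordinates_apply, WithLp.toLp_fst, WithLp.toLp_snd,
      Measure.volume_eq_prod] using
      (orthogonalCoordinates he hφ).measurePreserving.comp (WithLp.volume_preserving_toLp ℝ V)
  simpa only [Function.comp_def, map_smul, ← smul_add] using
    hcoord.comp (measurePreserving_fst_smul_snd volume)

lemma integrable_smul_homogeneous (he : ‖e‖ = 1)
    (hφ : LinearMap.range φ.toLinearMap = (ℝ ∙ e)ᗮ)
    (hF_meas : Measurable F) (hF : Integrable fun t => F t * |t| ^ (s + finrank ℝ V))
    (hK_meas : AEStronglyMeasurable K)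
    (hK : ∀ t : ℝ, t ≠ 0 → ∀ z, K (t • z) = |t| ^ s • K z)
    (hK_int : Integrable fun u => K (e + φ u)) :
    Integrable fun z => F ⟪e, z⟫ • K z := by
  have hmeas : AEStronglyMeasurable fun z => F ⟪e, z⟫ • K z :=
    (hF_meas.comp (by fun_prop)).aestronglyMeasurable.smul hK_meas
  have hF' : Integrable (fun t => F t * |t| ^ s) (absPowMeasure (finrank ℝ V)) :=
    integrable_absPowMeasure_iff.2 (hF.congr (abs_pow_mul_mul_rpow_ae_eq F s _).symm)
  rw [← (measurePreserving_smul_add_hyperplane he hφ).integrable_comp hmeas]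
  exact (hF'.smul_prod hK_int).congr (smul_homogeneous_comp_ae_eq he hφ hK).symm

lemma integral_smul_homogeneous (he : ‖e‖ = 1)
    (hφ : LinearMap.range φ.toLinearMap = (ℝ ∙ e)ᗮ)
    (hF_meas : Measurable F) (hK_meas : AEStronglyMeasurable K)
    (hK : ∀ t : ℝ, t ≠ 0 → ∀ z, K (t • z) = |t| ^ s • K z) :
    ∫ z, F ⟪e, z⟫ • K z =
      (∫ t, F t * |t| ^ (s + finrank ℝ V)) • ∫ u, K (e + φ u) := by
  have hmp := measurePreserving_smul_add_hyperplane he hφ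
  have hmeas : AEStronglyMeasurable fun z => F ⟪e, z⟫ • K z :=
    (hF_meas.comp (by fun_prop)).aestronglyMeasurable.smul hK_meas
  calc ∫ z, F ⟪e, z⟫ • K z
      = ∫ p : ℝ × V, F ⟪e, p.1 • (e + φ p.2)⟫ • K (p.1 • (e + φ p.2))
          ∂(absPowMeasure (finrank ℝ V)).prod volume := by
        rw [← hmp.map_eq, integral_map hmp.aemeasurable (hmp.map_eq.symm ▸ hmeas)]
    _ = ∫ p : ℝ × V, (F p.1 * |p.1| ^ s) • K (e + φ p.2)
          ∂(absPowMeasure (finrank ℝ V)).prod volume :=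
        integral_congr_ae (smul_homogeneous_comp_ae_eq he hφ hK)
    _ = (∫ t, F t * |t| ^ s ∂absPowMeasure (finrank ℝ V)) • ∫ u, K (e + φ u) :=
        integral_prod_smul (fun t => F t * |t| ^ s) (fun u => K (e + φ u))
    _ = (∫ t, F t * |t| ^ (s + finrank ℝ V)) • ∫ u, K (e + φ u) := by
        rw [integral_absPowMeasure, integral_congr_ae (abs_pow_mul_mul_rpow_ae_eq F s _)]

end HomogeneousKernel

end AnisotropicKernel

open AnisotropicKernel in
theorem stmt_1_general {E V G : Type*}
    [NormedAddCommGroup E] [InnerProductSpace ℝ E] [FiniteDimensional ℝ E] [MeasurableSpace E]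
    [BorelSpace E]
    [NormedAddCommGroup V] [InnerProductSpace ℝ V] [FiniteDimensional ℝ V] [MeasurableSpace V]
    [BorelSpace V]
    [NormedAddCommGroup G] [NormedSpace ℝ G] [CompleteSpace G]
    {α : ℝ} (hα : -1 < α) {g : E → G} (hg_cont : ContinuousOn g (sphere 0 1))
    (hg_even : ∀ θ ∈ sphere (0 : E) 1, g (-θ) = g θ) {e : E} (he : ‖e‖ = 1)
    {F : ℝ → ℝ} (hF_meas : Measurable F)
    (hF_int : Integrable fun t => |F t| * |t| ^ (-(1 + α)))
    {φ : V →ₗᵢ[ℝ] E} (hφ : LinearMap.range φ.toLinearMap = (ℝ ∙ e)ᗮ) :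
    Integrable (fun z => F ⟪e, z⟫ • ‖z‖ ^ (-(finrank ℝ E + α)) • g (‖z‖⁻¹ • z)) ∧
    ∫ z, F ⟪e, z⟫ • ‖z‖ ^ (-(finrank ℝ E + α)) • g (‖z‖⁻¹ • z) =
      (∫ t, F t * |t| ^ (-(1 + α))) •
        ∫ u, (1 + ‖u‖ ^ 2) ^ (-(finrank ℝ E + α) / 2) • g (‖e + φ u‖⁻¹ • (e + φ u)) := by
  have hdim : (finrank ℝ E : ℝ) = finrank ℝ V + 1 := by
    exact_mod_cast finrank_eq_finrank_hyperplane_add_one he hφ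
  set s : ℝ := -(finrank ℝ E + α) with hs
  have hexp : s + finrank ℝ V = -(1 + α) := by rw [hs, hdim]; ring
  have : Nontrivial E := nontrivial_of_ne e 0 (norm_ne_zero_iff.1 (he ▸ one_ne_zero))
  have hF : Integrable fun t => F t * |t| ^ (-(1 + α)) :=
    hF_int.mono (by fun_prop) (.of_forall fun t => by simp)
  have hK (t : ℝ) (ht : t ≠ 0) := homogeneousExtension_smul (s := s) hg_even ht
  have hK_meas := aestronglyMeasurable_homogeneousExtension (s := s) (μ := volume) hg_cont
  have hK_int := integrable_homogeneousExtension_add_hyperplane (s := s) (by linarith) hg_cont he hφ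
  change Integrable (fun z => F ⟪e, z⟫ • homogeneousExtension s g z) ∧
    ∫ z, F ⟪e, z⟫ • homogeneousExtension s g z = _
  simp only [← homogeneousExtension_add_hyperplane he hφ, ← hexp] at hF ⊢
  exact ⟨integrable_smul_homogeneous he hφ hF_meas hF hK_meas hK hK_int,
    integral_smul_homogeneous he hφ hF_meas hK_meas hK⟩

/-- **Fubini-type reduction of the anisotropic kernel.**
For `F` with `∫ |F(t)| |t|^{-(1+α)} dt < ∞`, the integral of `z ↦ F(e·z) g(z/|z|) |z|^{-(N+α)}`
over `ℝ^N` equals `a₁₁(e) ∫ F(t) |t|^{-(1+α)} dt`, where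
`a₁₁(e) = ∫_{e^⊥} g((e+u)/|e+u|) (1+|u|²)^{-(N+α)/2} du`, the hyperplane `e^⊥ ≅ ℝ^{N-1}`
being parametrized by a linear isometry `φ`. -/
theorem stmt_1 (N : ℕ) (hN : 2 ≤ N) (α : ℝ) (hα0 : 0 < α) (hα2 : α < 2)
    (g : EuclideanSpace ℝ (Fin N) → ℝ)
    (hg_cont : ContinuousOn g (sphere (0 : EuclideanSpace ℝ (Fin N)) 1))
    (hg_nonneg : ∀ θ ∈ sphere (0 : EuclideanSpace ℝ (Fin N)) 1, 0 ≤ g θ)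
    (hg_even : ∀ θ ∈ sphere (0 : EuclideanSpace ℝ (Fin N)) 1, g (-θ) = g θ)
    (e : EuclideanSpace ℝ (Fin N)) (he : ‖e‖ = 1)
    (F : ℝ → ℝ) (hF_meas : Measurable F)
    (hF_int : Integrable (fun t : ℝ => |F t| * |t| ^ (-(1 + α))))
    (φ : EuclideanSpace ℝ (Fin (N - 1)) →ₗᵢ[ℝ] EuclideanSpace ℝ (Fin N))
    (hφ : LinearMap.range φ.toLinearMap = (ℝ ∙ e)ᗮ) :
    Integrable (fun z : EuclideanSpace ℝ (Fin N) =>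
      F ⟪e, z⟫ * (g (‖z‖⁻¹ • z) * ‖z‖ ^ (-((N : ℝ) + α)))) ∧
    ∫ z : EuclideanSpace ℝ (Fin N),
        F ⟪e, z⟫ * (g (‖z‖⁻¹ • z) * ‖z‖ ^ (-((N : ℝ) + α))) =
      (∫ u : EuclideanSpace ℝ (Fin (N - 1)),
          g (‖e + φ u‖⁻¹ • (e + φ u)) * (1 + ‖u‖ ^ 2) ^ (-((N : ℝ) + α) / 2)) *
        ∫ t : ℝ, F t * |t| ^ (-(1 + α)) := by
  simpa [mul_comm] using
    stmt_1_general (by linarith) hg_cont hg_even he hF_meas hF_int hφ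
end

section
/- Let m₋ < m₊ be real numbers and let f : ℝ → ℝ be C¹ with f'(m₋) > 0 and f'(m₊) > 0. Let q : ℝ → ℝ be C¹ with q'(r) > 0 for all r, m₋ < q(r) < m₊ for all r, q(r) → m₋ as r → −∞ and q(r) → m₊ as r → +∞. Then there exists a constant C > 0 such that q'(r) + C f'(q(r)) ≥ 0 for all r ∈ ℝ. -/
open Filter
open scoped Topology

/-!
Where `f' ∘ q` is nonnegative every `C > 0` works, and since `f'` is continuous and positive at
both limits of `q`, this covers the complement of a compact set `K`. On `K`, the inequality
`0 < q' + C f'(q)` is an open condition on `(C, r)` that holds at `C = 0`, so the tube lemma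
extends it to all `C` near `0`, uniformly in `r ∈ K`.
-/

section PositivePerturbation

variable {X R : Type*} [TopologicalSpace X] [TopologicalSpace R] [Semiring R] [LinearOrder R]
  [OrderClosedTopology R] [IsTopologicalSemiring R] {u v : X → R}

theorem eventually_nhds_zero_forall_mem_add_mul_pos {K : Set X} (hK : IsCompact K)
    (hu : Continuous u) (hv : Continuous v) (hu_pos : ∀ x ∈ K, 0 < u x) :
    ∀ᶠ c in 𝓝 (0 : R), ∀ x ∈ K, 0 < u x + c * v x := by
  refine hK.eventually_forall_of_forall_eventually fun x hx => ?_
  have hcont : Continuous fun p : R × X => u p.2 + p.1 * v p.2 := by fun_prop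
  exact hcont.continuousAt.eventually_const_lt (by simpa using hu_pos x hx)

theorem eventually_nhdsGT_zero_forall_add_mul_nonneg [IsOrderedRing R]
    (hu : Continuous u) (hv : Continuous v) (hu_pos : ∀ x, 0 < u x)
    (hv_nonneg : ∀ᶠ x in cocompact X, 0 ≤ v x) :
    ∀ᶠ c in 𝓝[>] (0 : R), ∀ x, 0 ≤ u x + c * v x := by
  obtain ⟨K, hK, hvK⟩ := mem_cocompact.1 hv_nonneg
  have hpos_on_K : ∀ᶠ c in 𝓝[>] (0 : R), ∀ x ∈ K, 0 < u x + c * v x :=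
    (eventually_nhds_zero_forall_mem_add_mul_pos hK hu hv fun x _ => hu_pos x).filter_mono
      nhdsWithin_le_nhds
  filter_upwards [hpos_on_K, self_mem_nhdsWithin] with c hcK hc x
  by_cases hx : x ∈ K
  · exact (hcK x hx).le
  · exact add_nonneg (hu_pos x).le (mul_nonneg (le_of_lt hc) (hvK hx))

end PositivePerturbation

/-- **Pointwise lower bound `q' + C f'(q) ≥ 0` for monotone waves of bistable equations.**
If `f` is `C¹` with `f'(mminus) > 0` and `f'(mplus) > 0`, and `q` is `C¹` with `q' > 0`,
`mminus < q < mplus`, and limits `mminus` at `−∞`, `mplus` at `+∞`, then there is `C > 0`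
with `q'(r) + C f'(q(r)) ≥ 0` for all `r`. -/
theorem stmt_8 (mminus mplus : ℝ) (hm : mminus < mplus)
    (f : ℝ → ℝ) (hf : ContDiff ℝ 1 f)
    (hf'minus : 0 < deriv f mminus) (hf'plus : 0 < deriv f mplus)
    (q : ℝ → ℝ) (hq : ContDiff ℝ 1 q)
    (hq' : ∀ r, 0 < deriv q r)
    (hql : ∀ r, mminus < q r) (hqu : ∀ r, q r < mplus)
    (hbot : Tendsto q atBot (𝓝 mminus)) (htop : Tendsto q atTop (𝓝 mplus)) :
    ∃ C : ℝ, 0 < C ∧ ∀ r : ℝ, 0 ≤ deriv q r + C * deriv f (q r) := by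
  have hf' : Continuous (deriv f) := hf.continuous_deriv le_rfl
  have hf'q_pos : ∀ᶠ r in cocompact ℝ, 0 < deriv f (q r) := by
    rw [cocompact_eq_atBot_atTop, eventually_sup]
    exact ⟨((hf'.tendsto mminus).comp hbot).eventually_const_lt hf'minus,
      ((hf'.tendsto mplus).comp htop).eventually_const_lt hf'plus⟩
  have hsmall : ∀ᶠ C in 𝓝[>] (0 : ℝ), ∀ r, 0 ≤ deriv q r + C * deriv f (q r) :=
    eventually_nhdsGT_zero_forall_add_mul_nonneg (hq.continuous_deriv le_rfl)
      (hf'.comp hq.continuous) hq' (hf'q_pos.mono fun _ => le_of_lt)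
  obtain ⟨C, hC, hC_pos⟩ := (hsmall.and self_mem_nhdsWithin).exists
  exact ⟨C, hC_pos, hC⟩
end

section
/- Let N ≥ 1, let J : ℝ^N → [0,∞) be continuous with compact support, let q : ℝ → ℝ be C¹, nondecreasing and bounded, with q' bounded and integrable on ℝ, and let d : ℝ^N → ℝ be C² with bounded second derivative. Fix x ∈ ℝ^N and for ε > 0 set W_ε(z) = ( d(x+εz) − d(x) − ε Dd(x)·z ) / ε². Then, as ε → 0⁺, (1/ε) ∫_{ℝ^N} ∫_ℝ q'(ξ) [ q( ξ + Dd(x)·z + ε W_ε(z) ) − q( ξ + Dd(x)·z ) ] dξ J(z) dz converges to (1/2) ∫_{ℝ^N} ∫_ℝ q'(ξ) q'( ξ + Dd(x)·z ) ( D²d(x) z · z ) dξ J(z) dz. -/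
open MeasureTheory Metric Filter
open scoped Topology

/-!
Put `Φ(u) = ∫ q'(ξ) q(ξ + u) dξ`. The inner integral of the theorem is the increment
`Φ(a + ε W_ε(z)) - Φ(a)` at `a = Dd(x)·z`. Since `q'` is bounded and integrable, `Φ` is
differentiable with bounded derivative `Φ'(u) = ∫ q'(ξ) q'(ξ + u) dξ`. By Taylor's formula
`W_ε(z)` is half the Hessian form of `d` at a point between `x` and `x + ε z`, so it converges to
`D²d(x)z·z / 2` and is bounded by `K ‖z‖² / 2`. The difference quotients of `Φ` therefore converge
to `Φ'(a) D²d(x)z·z / 2` and are bounded by a multiple of `‖z‖²`. Dominated convergence in `z` only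
asks for a kernel with finite second moment.
-/

section TaylorRemainder

variable {E : Type*} [NormedAddCommGroup E] [NormedSpace ℝ E]

/-- The second-order difference quotient `W_ε(z)` of the phase `d` at `x`: the remainder of the
first-order Taylor expansion at `x + ε z`, divided by `ε ^ 2`. It is `0` when `ε = 0`. -/
noncomputable def scaledTaylorRemainder (d : E → ℝ) (x : E) (ε : ℝ) (z : E) : ℝ :=
  (d (x + ε • z) - d x - ε * fderiv ℝ d x z) / ε ^ 2

lemma hasDerivAt_comp_add_smul {F : Type*} [NormedAddCommGroup F] [NormedSpace ℝ F] {f : E → F}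
    {x z : E} {t : ℝ} (hf : DifferentiableAt ℝ f (x + t • z)) :
    HasDerivAt (fun t : ℝ => f (x + t • z)) (fderiv ℝ f (x + t • z) z) t := by
  have hray : HasDerivAt (fun t : ℝ => x + t • z) z t := by
    simpa using ((hasDerivAt_id t).smul_const z).const_add x
  exact hf.hasFDerivAt.comp_hasDerivAt t hray

lemma iteratedDeriv_two_comp_add_smul {d : E → ℝ} (hd : ContDiff ℝ 2 d) (x z : E) (t : ℝ) :
    iteratedDeriv 2 (fun t : ℝ => d (x + t • z)) t = fderiv ℝ (fderiv ℝ d) (x + t • z) z z := by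
  have hd' : Differentiable ℝ (fderiv ℝ d) :=
    (hd.fderiv_right (m := 1) (by norm_num)).differentiable (by norm_num)
  have hderiv : deriv (fun t : ℝ => d (x + t • z)) = fun t => fderiv ℝ d (x + t • z) z :=
    funext fun t => (hasDerivAt_comp_add_smul (hd.differentiable (by norm_num) _)).deriv
  rw [iteratedDeriv_succ, iteratedDeriv_one, hderiv]
  simpa using ((hasDerivAt_comp_add_smul (hd' (x + t • z))).clm_apply (hasDerivAt_const t z)).deriv

lemma exists_scaledTaylorRemainder_eq {d : E → ℝ} (hd : ContDiff ℝ 2 d) (x z : E) {ε : ℝ}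
    (hε : ε ≠ 0) :
    ∃ c, |c| ≤ |ε| ∧
      scaledTaylorRemainder d x ε z = fderiv ℝ (fderiv ℝ d) (x + c • z) z z / 2 := by
  have hray : ContDiff ℝ 2 (fun t : ℝ => d (x + t • z)) := by fun_prop
  have hderiv : derivWithin (fun t : ℝ => d (x + t • z)) (Set.uIcc 0 ε) 0 = fderiv ℝ d x z := by
    have h := hasDerivAt_comp_add_smul (hd.differentiable (by norm_num) (x + (0 : ℝ) • z))
    rw [zero_smul, add_zero] at h
    exact h.hasDerivWithinAt.derivWithin (uniqueDiffOn_uIcc hε.symm 0 Set.left_mem_uIcc)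
  obtain ⟨c, hc, hc_eq⟩ := taylor_mean_remainder_lagrange_iteratedDeriv (n := 1) hε.symm
    (by exact_mod_cast hray.contDiffOn)
  rw [taylorWithinEval_succ, taylor_within_zero_eval, iteratedDerivWithin_one, hderiv,
    iteratedDeriv_two_comp_add_smul hd] at hc_eq
  have htaylor : d (x + ε • z) - (d x + ε * fderiv ℝ d x z) =
      fderiv ℝ (fderiv ℝ d) (x + c • z) z z * ε ^ 2 / 2 := by
    simpa [Nat.factorial] using hc_eq
  refine ⟨c, by simpa using Set.abs_sub_left_of_mem_uIcc (Set.Ioo_subset_Icc_self hc), ?_⟩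
  rw [scaledTaylorRemainder, div_eq_iff (by positivity)]
  linarith

lemma abs_fderiv_fderiv_apply_le (d : E → ℝ) (y z : E) :
    |fderiv ℝ (fderiv ℝ d) y z z| ≤ ‖iteratedFDeriv ℝ 2 d y‖ * ‖z‖ ^ 2 := by
  simpa [iteratedFDeriv_two_apply, Fin.prod_univ_two, sq] using
    (iteratedFDeriv ℝ 2 d y).le_opNorm ![z, z]

lemma abs_scaledTaylorRemainder_le {d : E → ℝ} (hd : ContDiff ℝ 2 d) {K : ℝ}
    (hK : ∀ y, ‖iteratedFDeriv ℝ 2 d y‖ ≤ K) (x z : E) {ε : ℝ} (hε : ε ≠ 0) :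
    |scaledTaylorRemainder d x ε z| ≤ K / 2 * ‖z‖ ^ 2 := by
  obtain ⟨c, -, hc⟩ := exists_scaledTaylorRemainder_eq hd x z hε
  calc |scaledTaylorRemainder d x ε z|
      = |fderiv ℝ (fderiv ℝ d) (x + c • z) z z| / 2 := by rw [hc, abs_div, abs_two]
    _ ≤ K * ‖z‖ ^ 2 / 2 := by
        gcongr
        exact (abs_fderiv_fderiv_apply_le d _ z).trans (by gcongr; exact hK _)
    _ = K / 2 * ‖z‖ ^ 2 := by ring

lemma tendsto_scaledTaylorRemainder {d : E → ℝ} (hd : ContDiff ℝ 2 d) (x z : E) :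
    Tendsto (fun ε => scaledTaylorRemainder d x ε z) (𝓝[≠] 0)
      (𝓝 (fderiv ℝ (fderiv ℝ d) x z z / 2)) := by
  have hcont : Continuous fun t : ℝ => fderiv ℝ (fderiv ℝ d) (x + t • z) z z / 2 := by
    have : Continuous (fderiv ℝ (fderiv ℝ d)) :=
      (hd.fderiv_right (m := 1) (by norm_num)).continuous_fderiv (by norm_num)
    fun_prop
  choose! c hc_le hc_eq using fun (ε : ℝ) (hε : ε ≠ 0) => exists_scaledTaylorRemainder_eq hd x z hε
  have hc_zero : Tendsto c (𝓝[≠] 0) (𝓝 0) := by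
    refine squeeze_zero_norm' (a := fun ε => |ε|) ?_ ?_
    · filter_upwards [self_mem_nhdsWithin] with ε hε using hc_le ε hε
    · simpa using (continuous_abs.tendsto (0 : ℝ)).mono_left nhdsWithin_le_nhds
  have hlim := (hcont.tendsto 0).comp hc_zero
  rw [zero_smul, add_zero] at hlim
  refine hlim.congr' ?_
  filter_upwards [self_mem_nhdsWithin] with ε hε using (hc_eq ε hε).symm

end TaylorRemainder

section CrossCorrelation

/-- The cross-correlation `u ↦ ∫ f(ξ) g(ξ + u) dξ` of two functions on the line. For `f = g = q'`
it is the autocorrelation of the slope in the limiting diffusion matrix. -/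
noncomputable def crossCorrelation (f g : ℝ → ℝ) (u : ℝ) : ℝ :=
  ∫ ξ, f ξ * g (ξ + u)

variable {f g : ℝ → ℝ} {B M : ℝ}

lemma abs_crossCorrelation_le (hf : Integrable f) (hg_le : ∀ ξ, |g ξ| ≤ B) (u : ℝ) :
    |crossCorrelation f g u| ≤ (∫ ξ, |f ξ|) * B := by
  rw [crossCorrelation, ← Real.norm_eq_abs, ← integral_mul_const]
  refine norm_integral_le_of_norm_le (hf.abs.mul_const B) (Eventually.of_forall fun ξ => ?_)
  rw [norm_mul, Real.norm_eq_abs]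
  gcongr
  exact hg_le _

lemma integrable_mul_comp_add_right (hf : Integrable f) (hg : Measurable g)
    (hg_le : ∀ ξ, |g ξ| ≤ B) (u : ℝ) : Integrable fun ξ => f ξ * g (ξ + u) :=
  hf.mul_bdd (c := B) (hg.comp (measurable_add_const u)).aestronglyMeasurable
    (Eventually.of_forall fun _ => hg_le _)

lemma integral_mul_sub_eq_crossCorrelation_sub (hf : Integrable f) (hg : Measurable g)
    (hg_le : ∀ ξ, |g ξ| ≤ B) (u h : ℝ) :
    ∫ ξ, f ξ * (g (ξ + u + h) - g (ξ + u)) =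
      crossCorrelation f g (u + h) - crossCorrelation f g u := by
  simp only [mul_sub, add_assoc]
  exact integral_sub (integrable_mul_comp_add_right hf hg hg_le _)
    (integrable_mul_comp_add_right hf hg hg_le _)

lemma hasDerivAt_crossCorrelation (hf : Integrable f) (hg : Differentiable ℝ g)
    (hg_le : ∀ ξ, |g ξ| ≤ B) (hg'_le : ∀ ξ, |deriv g ξ| ≤ M) (u : ℝ) :
    HasDerivAt (crossCorrelation f g) (crossCorrelation f (deriv g) u) u := by
  have hint := integrable_mul_comp_add_right hf hg.continuous.measurable hg_le
  have hint' := integrable_mul_comp_add_right hf (measurable_deriv g) hg'_le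
  refine (hasDerivAt_integral_of_dominated_loc_of_deriv_le (bound := fun ξ => |f ξ| * M)
    (F' := fun u ξ => f ξ * deriv g (ξ + u)) univ_mem
    (Eventually.of_forall fun v => (hint v).aestronglyMeasurable) (hint u)
    (hint' u).aestronglyMeasurable ?_ (hf.abs.mul_const M) ?_).2
  · refine Eventually.of_forall fun ξ v _ => ?_
    rw [norm_mul, Real.norm_eq_abs]
    gcongr
    exact hg'_le _
  · exact Eventually.of_forall fun ξ v _ =>
      ((hg (ξ + v)).hasDerivAt.comp_const_add ξ v).const_mul (f ξ)

end CrossCorrelation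

lemma abs_sub_le_integral_abs_deriv {q : ℝ → ℝ} (hq : Differentiable ℝ q)
    (hq' : Integrable (deriv q)) (a b : ℝ) : |q b - q a| ≤ ∫ ξ, |deriv q ξ| := by
  rw [← intervalIntegral.integral_deriv_eq_sub (fun ξ _ => hq ξ) hq'.intervalIntegrable]
  exact intervalIntegral.norm_integral_le_integral_norm_uIoc.trans
    (setIntegral_le_integral hq'.norm (Eventually.of_forall fun _ => norm_nonneg _))

lemma tendsto_one_div_mul_sub_of_hasDerivAt {Φ : ℝ → ℝ} {Φ' b l : ℝ} (hΦ : HasDerivAt Φ Φ' b)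
    {w : ℝ → ℝ} (hw : Tendsto w (𝓝[≠] 0) (𝓝 l)) :
    Tendsto (fun ε => (1 / ε) * (Φ (b + ε * w ε) - Φ b)) (𝓝[≠] 0) (𝓝 (Φ' * l)) := by
  have hincr : Tendsto (fun ε => ε * w ε) (𝓝[≠] 0) (𝓝 0) := by
    simpa using (tendsto_id.mono_left nhdsWithin_le_nhds).mul hw
  have hscaled : Tendsto (fun ε => (1 / ε) • (ε * w ε)) (𝓝[≠] 0) (𝓝 l) := by
    refine hw.congr' ?_
    filter_upwards [self_mem_nhdsWithin] with ε (hε : ε ≠ 0)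
    rw [smul_eq_mul, one_div, inv_mul_cancel_left₀ hε]
  simpa [mul_comm l] using (hasFDerivWithinAt_univ.2 hΦ.hasFDerivAt).lim hincr
    (Eventually.of_forall fun _ => Set.mem_univ _) hscaled

lemma abs_one_div_mul_sub_le {Φ Φ' : ℝ → ℝ} (hΦ : ∀ u, HasDerivAt Φ (Φ' u) u) {L : ℝ}
    (hL : ∀ u, |Φ' u| ≤ L) (b w : ℝ) {ε : ℝ} (hε : ε ≠ 0) :
    |(1 / ε) * (Φ (b + ε * w) - Φ b)| ≤ L * |w| := by
  have hlip : |Φ (b + ε * w) - Φ b| ≤ L * |b + ε * w - b| :=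
    convex_univ.norm_image_sub_le_of_norm_hasDerivWithin_le
      (fun u _ => (hΦ u).hasDerivWithinAt) (fun u _ => hL u) (Set.mem_univ b) (Set.mem_univ _)
  rw [abs_mul, abs_div, abs_one, one_div, inv_mul_le_iff₀ (abs_pos.2 hε)]
  calc |Φ (b + ε * w) - Φ b| ≤ L * |b + ε * w - b| := hlip
    _ = |ε| * (L * |w|) := by rw [add_sub_cancel_left, abs_mul]; ring

lemma tendsto_integral_one_div_mul_sub {α : Type*} [MeasurableSpace α] {μ : Measure α}
    {Φ Φ' : ℝ → ℝ} (hΦ : ∀ u, HasDerivAt Φ (Φ' u) u) {L : ℝ} (hL : ∀ u, |Φ' u| ≤ L)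
    {a : α → ℝ} (ha : AEStronglyMeasurable a μ)
    {J : α → ℝ} (hJ : AEStronglyMeasurable J μ)
    {w : ℝ → α → ℝ} (hw : ∀ ε, AEStronglyMeasurable (w ε) μ)
    {B : α → ℝ} (hw_le : ∀ ε ≠ 0, ∀ᵐ z ∂μ, |w ε z| ≤ B z)
    (hBJ : Integrable (fun z => B z * J z) μ)
    {w₀ : α → ℝ} (hw_lim : ∀ᵐ z ∂μ, Tendsto (fun ε => w ε z) (𝓝[≠] 0) (𝓝 (w₀ z))) :
    Tendsto (fun ε => (1 / ε) * ∫ z, (Φ (a z + ε * w ε z) - Φ (a z)) * J z ∂μ) (𝓝[≠] 0)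
      (𝓝 (∫ z, Φ' (a z) * w₀ z * J z ∂μ)) := by
  have hΦ_cont : Continuous Φ := continuous_iff_continuousAt.2 fun u => (hΦ u).continuousAt
  simp only [← integral_const_mul, ← mul_assoc]
  refine tendsto_integral_filter_of_dominated_convergence (fun z => L * |B z * J z|)
    (Eventually.of_forall fun ε => ?_) ?_ (hBJ.abs.const_mul L) ?_
  · have hΦ_shift := hΦ_cont.comp_aestronglyMeasurable (ha.add ((hw ε).const_mul ε))
    exact ((hΦ_shift.sub (hΦ_cont.comp_aestronglyMeasurable ha)).const_mul (1 / ε)).mul hJ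
  · filter_upwards [self_mem_nhdsWithin] with ε hε
    filter_upwards [hw_le ε hε] with z hz
    have hL_nonneg : 0 ≤ L := (abs_nonneg _).trans (hL 0)
    calc ‖1 / ε * (Φ (a z + ε * w ε z) - Φ (a z)) * J z‖
        ≤ L * |w ε z| * |J z| := by
          rw [norm_mul]
          exact mul_le_mul_of_nonneg_right (abs_one_div_mul_sub_le hΦ hL _ _ hε) (abs_nonneg _)
      _ ≤ L * B z * |J z| := by gcongr
      _ ≤ L * |B z * J z| := by
          rw [abs_mul, mul_assoc]
          gcongr
          exact le_abs_self _
  · filter_upwards [hw_lim] with z hz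
    exact (tendsto_one_div_mul_sub_of_hasDerivAt (hΦ (a z)) hz).mul_const (J z)

theorem stmt_14_general {E : Type*} [NormedAddCommGroup E] [NormedSpace ℝ E] [MeasurableSpace E]
    [OpensMeasurableSpace E] {μ : Measure E}
    {J : E → ℝ} (hJ : AEStronglyMeasurable J μ) (hJ_moment : Integrable (fun z => ‖z‖ ^ 2 * J z) μ)
    {q : ℝ → ℝ} (hq : Differentiable ℝ q) (hq'_bdd : ∃ M, ∀ ξ, |deriv q ξ| ≤ M)
    (hq'_int : Integrable (deriv q))
    {d : E → ℝ} (hd : ContDiff ℝ 2 d) (hd2 : ∃ K, ∀ y, ‖iteratedFDeriv ℝ 2 d y‖ ≤ K) (x : E) :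
    Tendsto (fun ε : ℝ => (1 / ε) * ∫ z, (∫ ξ, deriv q ξ *
        (q (ξ + fderiv ℝ d x z + ε * scaledTaylorRemainder d x ε z) -
          q (ξ + fderiv ℝ d x z))) * J z ∂μ)
      (𝓝[≠] 0)
      (𝓝 ((1 / 2) * ∫ z, (∫ ξ, deriv q ξ * deriv q (ξ + fderiv ℝ d x z)) *
        (fderiv ℝ (fderiv ℝ d) x z z) * J z ∂μ)) := by
  obtain ⟨M, hM⟩ := hq'_bdd
  obtain ⟨K, hK⟩ := hd2
  have hq_le (ξ : ℝ) : |q ξ| ≤ |q 0| + ∫ ξ, |deriv q ξ| := by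
    linarith [abs_sub_abs_le_abs_sub (q ξ) (q 0), abs_sub_le_integral_abs_deriv hq hq'_int 0 ξ]
  have hd_cont : Continuous d := hd.continuous
  have hW_meas (ε : ℝ) : AEStronglyMeasurable (scaledTaylorRemainder d x ε) μ := by
    unfold scaledTaylorRemainder
    exact Continuous.aestronglyMeasurable (by fun_prop)
  have hlim := tendsto_integral_one_div_mul_sub
    (hasDerivAt_crossCorrelation hq'_int hq hq_le hM) (abs_crossCorrelation_le hq'_int hM)
    (fderiv ℝ d x).continuous.aestronglyMeasurable hJ hW_meas
    (fun ε hε => Eventually.of_forall fun z => abs_scaledTaylorRemainder_le hd hK x z hε)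
    (by simpa only [mul_assoc] using hJ_moment.const_mul (K / 2))
    (Eventually.of_forall (tendsto_scaledTaylorRemainder hd x))
  simp only [integral_mul_sub_eq_crossCorrelation_sub hq'_int hq.continuous.measurable hq_le]
  convert hlim using 2
  rw [← integral_const_mul]
  congr with z
  simp only [crossCorrelation]
  ring

/-- **Convergence of the averaged oscillating coefficient: regular kernel case.**
For a continuous compactly supported kernel `J ≥ 0`, a `C¹` nondecreasing bounded profile `q`
with bounded integrable slope, and a `C²` phase `d` with bounded Hessian, setting
`W_ε(z) = (d(x+εz) − d(x) − ε Dd(x)·z)/ε²`, as `ε → 0⁺`,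
`(1/ε) ∫∫ q'(ξ) [q(ξ + Dd(x)·z + εW_ε(z)) − q(ξ + Dd(x)·z)] dξ J(z) dz` converges to
`(1/2) ∫∫ q'(ξ) q'(ξ + Dd(x)·z) (D²d(x)z·z) dξ J(z) dz`. -/
theorem stmt_14 (N : ℕ) (hN : 1 ≤ N)
    (J : EuclideanSpace ℝ (Fin N) → ℝ) (hJ_cont : Continuous J)
    (hJ_supp : HasCompactSupport J) (hJ_nonneg : ∀ z, 0 ≤ J z)
    (q : ℝ → ℝ) (hq : ContDiff ℝ 1 q) (hq_mono : Monotone q)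
    (hq_bdd : ∃ M, ∀ ξ, |q ξ| ≤ M)
    (hq'_bdd : ∃ M, ∀ ξ, |deriv q ξ| ≤ M) (hq'_int : Integrable (deriv q))
    (d : EuclideanSpace ℝ (Fin N) → ℝ) (hd : ContDiff ℝ 2 d)
    (hd2 : ∃ K, ∀ y, ‖iteratedFDeriv ℝ 2 d y‖ ≤ K)
    (x : EuclideanSpace ℝ (Fin N)) :
    Tendsto (fun ε : ℝ =>
        (1 / ε) * ∫ z : EuclideanSpace ℝ (Fin N),
          (∫ ξ : ℝ, deriv q ξ *
            (q (ξ + fderiv ℝ d x z +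
                ε * ((d (x + ε • z) - d x - ε * fderiv ℝ d x z) / ε ^ 2)) -
              q (ξ + fderiv ℝ d x z))) * J z)
      (𝓝[>] (0 : ℝ))
      (𝓝 ((1 / 2) * ∫ z : EuclideanSpace ℝ (Fin N),
        (∫ ξ : ℝ, deriv q ξ * deriv q (ξ + fderiv ℝ d x z)) *
          (fderiv ℝ (fderiv ℝ d) x z z) * J z)) := by
  exact (stmt_14_general hJ_cont.aestronglyMeasurable
    (Continuous.integrable_of_hasCompactSupport (by fun_prop) hJ_supp.mul_left)
    (hq.differentiable one_ne_zero) hq'_bdd hq'_int hd hd2 x).mono_left (nhdsGT_le_nhdsNE 0)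
end
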